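/- Let E be a complex Hilbert space and let S be a set of orthogonal projection operators on E (continuous linear maps T : E →L[ℂ] E with T = T* and T ∘ T = T). For a set A of orthogonal projections, let A^! denote the set of all orthogonal projections on E that commute with every element of A. Then S = (S^!)^! if and only if there exists a von Neumann algebra M on E such that S is exactly the set of orthogonal projections belonging to M. -/

import Mathlib

variable {E : Type*} [NormedAddCommGroup E] [InnerProductSpace ℂ E] [CompleteSpace E]

/-- An orthogonal projection operator on `E`: a continuous linear map that is
self-adjoint and idempotent. -/
def IsOrthoProj (T : E →L[ℂ] E) : Prop :=
  ContinuousLinearMap.adjoint T = T ∧ T ∘L T = T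

/-- The commutant `A^!` of a set `A` of operators within the orthogonal
projections: the set of orthogonal projections commuting with every element of `A`. -/
def projCommutant (A : Set (E →L[ℂ] E)) : Set (E →L[ℂ] E) :=
  {T | IsOrthoProj T ∧ ∀ S ∈ A, T ∘L S = S ∘L T}


theorem alg_one {A : Type*} [Ring A] [Algebra ℝ A] (a p u v : A) (s : ℝ)
    (ha : a = u - v + s • (1 : A)) (h1 : p * u = u) (h2 : u * p = u) (h3 : p * v = 0)
    (h4 : v * p = 0) (h5 : p * p = p) :
    a - s • p = u + (1 - p) * a * (1 - p) := by
  have e1 : p * a = u + s • p := by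
    rw [ha, mul_add, mul_sub, h1, h3, mul_smul_comm, mul_one, sub_zero]
  have e2 : a * p = u + s • p := by
    rw [ha, add_mul, sub_mul, h2, h4, smul_mul_assoc, one_mul, sub_zero]
  have e3 : p * a * p = u + s • p := by
    rw [e1, add_mul, h2, smul_mul_assoc, h5]
  have e4 : (1 - p) * a * (1 - p) = a - p * a - a * p + p * a * p := by
    noncomm_ring
  rw [e4, e3, e1, e2, ha]
  module

theorem alg_two {A : Type*} [Ring A] [Algebra ℝ A] (a p u v : A) (s : ℝ)
    (ha : a = u - v + s • (1 : A)) (h1 : p * u = u) (h2 : u * p = u) (h3 : p * v = 0)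
    (h4 : v * p = 0) (h5 : p * p = p) :
    s • (1 : A) - (a - s • p) = v + p * ((2 * s) • (1 : A) - a) * p := by
  have e1 : p * a = u + s • p := by
    rw [ha, mul_add, mul_sub, h1, h3, mul_smul_comm, mul_one, sub_zero]
  have e2 : a * p = u + s • p := by
    rw [ha, add_mul, sub_mul, h2, h4, smul_mul_assoc, one_mul, sub_zero]
  have e3 : p * a * p = u + s • p := by
    rw [e1, add_mul, h2, smul_mul_assoc, h5]
  have e4 : p * ((2 * s) • (1 : A) - a) * p = (2 * s) • p - p * a * p := by
    rw [mul_sub, sub_mul, mul_smul_comm, mul_one, smul_mul_assoc, h5]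
  rw [e4, e3, ha]
  module

/-- Halving step: for `0 ≤ a ≤ 2 s` in `N` there is a projection `p ∈ N` with
`0 ≤ a - s p ≤ s`. -/
theorem halving_step (N : VonNeumannAlgebra E) (a : E →L[ℂ] E) (s : ℝ) (haN : a ∈ N)
    (ha : 0 ≤ a) (has : a ≤ (2 * s) • (1 : E →L[ℂ] E)) :
    ∃ p ∈ N, IsStarProjection p ∧ 0 ≤ a - s • p ∧ a - s • p ≤ s • (1 : E →L[ℂ] E) := by
  set c : E →L[ℂ] E := a - s • (1 : E →L[ℂ] E) with hc
  have hcsa : IsSelfAdjoint c :=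
    (IsSelfAdjoint.of_nonneg ha).sub ((IsSelfAdjoint.all s).smul (IsSelfAdjoint.one _))
  have hpos : 0 ≤ c⁺ := CFC.posPart_nonneg c
  have hneg : 0 ≤ c⁻ := CFC.negPart_nonneg c
  have hsub : c⁺ - c⁻ = c := CFC.posPart_sub_negPart c
  have hmul : c⁻ * c⁺ = 0 := CFC.negPart_mul_posPart c
  set U : Submodule ℂ E := (c⁻).ker with hU
  have hUc : IsClosed (U : Set E) := (c⁻).isClosed_ker
  have : CompleteSpace U := hUc.completeSpace_coe
  set p : E →L[ℂ] E := U.starProjection with hp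
  have hproj : IsStarProjection p := isStarProjection_starProjection
  have hnp : c⁻ * p = 0 := by
    ext x
    have : p x ∈ U := by simp [hp]
    simpa [hU] using this
  have hpn : p * c⁻ = 0 := by
    simpa [hproj.isSelfAdjoint.star_eq, (IsSelfAdjoint.of_nonneg hneg).star_eq]
      using congr(star $hnp)
  have hpp : p * c⁺ = c⁺ := by
    ext x
    have : c⁺ x ∈ U := by
      have := congr($hmul x)
      exact this
    exact Submodule.starProjection_eq_self_iff.mpr this
  have hpp' : c⁺ * p = c⁺ := by
    simpa [hproj.isSelfAdjoint.star_eq, (IsSelfAdjoint.of_nonneg hpos).star_eq]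
      using congr(star $hpp)
  have hidem : p * p = p := hproj.isIdempotentElem
  have haeq : a = c⁺ - c⁻ + s • 1 := by rw [hsub, hc]; abel
  refine ⟨p, ?_, hproj, ?_, ?_⟩
  · rw [VonNeumannAlgebra.IsStarProjection.mem_iff hproj]
    intro y hy
    rw [hp, Submodule.range_starProjection, Module.End.mem_invtSubmodule]
    intro x hx
    have hya : Commute a y := VonNeumannAlgebra.mem_commutant_iff.mp hy a haN
    have hyc : Commute c y := hya.sub_left ((Commute.one_left y).smul_left s)
    have hyn : Commute (c⁻) y := by
      rw [CFC.negPart_def]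
      exact hyc.cfcₙ_real _
    have h1 : c⁻ x = 0 := by simpa [hU] using hx
    have h2 : c⁻ (y x) = y (c⁻ x) := congr($(hyn.eq) x)
    simp [hU, h2, h1]
  · have h1 : 0 ≤ (1 - p) * a * (1 - p) :=
      hproj.one_sub.isSelfAdjoint.conjugate_nonneg ha
    have : a - s • p = c⁺ + (1 - p) * a * (1 - p) :=
      alg_one a p _ _ s haeq hpp hpp' hpn hnp hidem
    rw [this]
    exact add_nonneg hpos h1
  · have h1 : 0 ≤ p * ((2 * s) • 1 - a) * p :=
      hproj.isSelfAdjoint.conjugate_nonneg (sub_nonneg.mpr has)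
    have : s • 1 - (a - s • p) = c⁻ + p * ((2 * s) • 1 - a) * p :=
      alg_two a p _ _ s haeq hpp hpp' hpn hnp hidem
    rw [← sub_nonneg, this]
    exact add_nonneg hneg h1

theorem smul_memN (N : VonNeumannAlgebra E) (s : ℝ) {a : E →L[ℂ] E} (ha : a ∈ N) : s • a ∈ N := by
  have : (s : ℂ) • a ∈ N.toStarSubalgebra := N.toStarSubalgebra.smul_mem ha _
  simpa using this

theorem commutator_bound (N : VonNeumannAlgebra E) (T : E →L[ℂ] E)
    (hT : ∀ p ∈ N, IsStarProjection p → Commute T p) (n : ℕ) :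
    ∀ (r : ℝ) (a : E →L[ℂ] E), 0 ≤ r → a ∈ N → 0 ≤ a → a ≤ r • (1 : E →L[ℂ] E) →
      ‖T * a - a * T‖ ≤ 2 * ‖T‖ * (r / 2 ^ n) := by
  induction n with
  | zero =>
    intro r a hr _ ha har
    have hn : ‖a‖ ≤ r := (CStarAlgebra.norm_le_iff_le_algebraMap a hr ha).mpr
      (by rwa [Algebra.algebraMap_eq_smul_one])
    calc ‖T * a - a * T‖ ≤ ‖T * a‖ + ‖a * T‖ := norm_sub_le _ _
      _ ≤ ‖T‖ * ‖a‖ + ‖a‖ * ‖T‖ := add_le_add (norm_mul_le _ _) (norm_mul_le _ _)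
      _ = 2 * ‖T‖ * ‖a‖ := by ring
      _ ≤ 2 * ‖T‖ * (r / 2 ^ 0) := by simp; gcongr
  | succ n ih =>
    intro r a hr haN ha har
    obtain ⟨p, hpN, hp, h0, h1⟩ := halving_step N a (r / 2) haN ha
      (by rwa [mul_div_cancel₀ r two_ne_zero])
    have h := ih (r / 2) _ (by positivity) (sub_mem haN (smul_memN N (r / 2) hpN)) h0 h1
    have e : T * (a - (r / 2) • p) - (a - (r / 2) • p) * T = T * a - a * T := by
      simp only [mul_sub, sub_mul, smul_mul_assoc, mul_smul_comm, (hT p hpN hp).eq]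
      abel
    rw [e] at h
    refine h.trans (le_of_eq ?_)
    rw [pow_succ]
    field_simp

theorem commute_nonneg (N : VonNeumannAlgebra E) (T : E →L[ℂ] E)
    (hT : ∀ p ∈ N, IsStarProjection p → Commute T p) (r : ℝ) (a : E →L[ℂ] E) (hr : 0 ≤ r)
    (haN : a ∈ N) (ha : 0 ≤ a) (har : a ≤ r • (1 : E →L[ℂ] E)) : Commute T a := by
  have hlim : Filter.Tendsto (fun n : ℕ => 2 * ‖T‖ * (r / 2 ^ n)) Filter.atTop (nhds 0) := by
    have := (tendsto_pow_atTop_nhds_zero_of_lt_one (r := (1 / 2 : ℝ))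
      (by norm_num) (by norm_num)).const_mul (2 * ‖T‖ * r)
    simpa [div_eq_mul_inv, mul_assoc] using this
  have := ge_of_tendsto' hlim (fun n => commutator_bound N T hT n r a hr haN ha har)
  exact sub_eq_zero.mp (norm_le_zero_iff.mp this)

theorem commute_sa (N : VonNeumannAlgebra E) (T : E →L[ℂ] E)
    (hT : ∀ p ∈ N, IsStarProjection p → Commute T p) (a : E →L[ℂ] E)
    (haN : a ∈ N) (ha : IsSelfAdjoint a) : Commute T a := by
  have h1 := ha.le_algebraMap_norm_self
  have h2 := ha.neg_algebraMap_norm_le_self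
  rw [Algebra.algebraMap_eq_smul_one] at h1 h2
  have h := commute_nonneg N T hT (‖a‖ + ‖a‖) (a + ‖a‖ • 1) (by positivity)
    (add_mem haN (smul_memN N _ (one_mem N))) (neg_le_iff_add_nonneg.mp h2)
    (by rw [add_smul]; gcongr)
  have h' := h.sub_right ((Commute.one_right T).smul_right ‖a‖)
  simpa using h'

theorem commute_all (N : VonNeumannAlgebra E) (T : E →L[ℂ] E)
    (hT : ∀ p ∈ N, IsStarProjection p → Commute T p) (a : E →L[ℂ] E)
    (haN : a ∈ N) : Commute T a := by
  have hs : star a ∈ N := star_mem haN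
  have h1 : Commute T (a + star a) :=
    commute_sa N T hT _ (add_mem haN hs) (IsSelfAdjoint.add_star_self a)
  have hI : Complex.I • (a - star a) ∈ N :=
    N.toStarSubalgebra.smul_mem (show a - star a ∈ N.toStarSubalgebra from sub_mem haN hs) _
  have h2 : Commute T (Complex.I • (a - star a)) :=
    commute_sa N T hT _ hI (by
      rw [IsSelfAdjoint, star_smul, star_sub, star_star]
      simp [← smul_neg])
  have h3 : Commute T (a - star a) := by
    have := h2.smul_right (-Complex.I)
    simpa [smul_smul] using this
  have h4 : Commute T ((2⁻¹ : ℂ) • ((a + star a) + (a - star a))) :=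
    (h1.add_right h3).smul_right _
  have e : (2⁻¹ : ℂ) • ((a + star a) + (a - star a)) = a := by module
  rwa [e] at h4

theorem isOrthoProj_iff (T : E →L[ℂ] E) : IsOrthoProj T ↔ IsStarProjection T :=
  ⟨fun h => ⟨h.2, h.1⟩, fun h => ⟨h.2, h.1⟩⟩

/-- The projections commuting with the projections of `N` are those of the commutant. -/
theorem projCommutant_vn (N : VonNeumannAlgebra E) :
    projCommutant {T : E →L[ℂ] E | IsOrthoProj T ∧ T ∈ N} =
      {T : E →L[ℂ] E | IsOrthoProj T ∧ T ∈ N.commutant} := by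
  ext T
  refine and_congr_right fun _ => ?_
  rw [VonNeumannAlgebra.mem_commutant_iff]
  constructor
  · intro h a ha
    exact (commute_all N T (fun p hp hp' => h p ⟨(isOrthoProj_iff p).mpr hp', hp⟩) a ha).symm
  · intro h p hp
    exact (h p hp.2).symm

/-- The commutant of `S` as a von Neumann algebra. -/
noncomputable def setCommutant (S : Set (E →L[ℂ] E)) : VonNeumannAlgebra E where
  toStarSubalgebra := StarSubalgebra.centralizer ℂ S
  centralizer_centralizer' := Set.centralizer_centralizer_centralizer (S ∪ star S)

theorem projCommutant_eq (S : Set (E →L[ℂ] E)) (hS : ∀ T ∈ S, IsOrthoProj T) :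
    projCommutant S = {T : E →L[ℂ] E | IsOrthoProj T ∧ T ∈ setCommutant S} := by
  ext T
  refine and_congr_right fun _ => ?_
  have : T ∈ setCommutant S ↔ T ∈ StarSubalgebra.centralizer ℂ S := Iff.rfl
  rw [this, StarSubalgebra.mem_centralizer_iff]
  constructor
  · intro h g hg
    have e : star g = g := (hS g hg).1
    rw [e]
    exact ⟨(h g hg).symm, (h g hg).symm⟩
  · intro h g hg
    exact (h g hg).1.symm

theorem stmt18 (S : Set (E →L[ℂ] E)) (hS : ∀ T ∈ S, IsOrthoProj T) :
    S = projCommutant (projCommutant S) ↔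
      ∃ M : VonNeumannAlgebra E, S = {T : E →L[ℂ] E | IsOrthoProj T ∧ T ∈ M} := by
  constructor
  · intro h
    refine ⟨(setCommutant S).commutant, ?_⟩
    rw [← projCommutant_vn, ← projCommutant_eq S hS]
    exact h
  · rintro ⟨M, rfl⟩
    rw [projCommutant_vn, projCommutant_vn, VonNeumannAlgebra.commutant_commutant]
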